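/- Euler–Lagrange characterization: a periodic configuration (u, A) satisfies the Yang–Mills–Higgs equations if and only if for every smooth ℤ²-periodic v : ℝ² → ℂ and a = (a₁, a₂) : ℝ² → ℝ², the derivative at t = 0 of t ↦ E_ε(u + t·v, A + t·a) vanishes. -/

import Mathlib

open MeasureTheory Complex

noncomputable section

/-- Partial derivative in the first coordinate direction. -/
def pd1 {E : Type*} [NormedAddCommGroup E] [NormedSpace ℝ E] (f : ℝ × ℝ → E) (x : ℝ × ℝ) : E :=
  fderiv ℝ f x (1, 0)

/-- Partial derivative in the second coordinate direction. -/
def pd2 {E : Type*} [NormedAddCommGroup E] [NormedSpace ℝ E] (f : ℝ × ℝ → E) (x : ℝ × ℝ) : E :=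
  fderiv ℝ f x (0, 1)

/-- First covariant derivative `D₁f = ∂₁f − iA₁f`. -/
def D1 (A1 : ℝ × ℝ → ℝ) (f : ℝ × ℝ → ℂ) (x : ℝ × ℝ) : ℂ :=
  pd1 f x - Complex.I * (A1 x) * f x

/-- Second covariant derivative `D₂f = ∂₂f − iA₂f`. -/
def D2 (A2 : ℝ × ℝ → ℝ) (f : ℝ × ℝ → ℂ) (x : ℝ × ℝ) : ℂ :=
  pd2 f x - Complex.I * (A2 x) * f x

/-- Curvature function `F = ∂₁A₂ − ∂₂A₁`. -/
def curv (A1 A2 : ℝ × ℝ → ℝ) (x : ℝ × ℝ) : ℝ := pd1 A2 x - pd2 A1 x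

/-- `h = (1 − |u|²)/(2ε²)`. -/
def hfun (ε : ℝ) (u : ℝ × ℝ → ℂ) (x : ℝ × ℝ) : ℝ := (1 - ‖u x‖ ^ 2) / (2 * ε ^ 2)

/-- `σ₊ = D₁u + iD₂u`. -/
def sigP (u : ℝ × ℝ → ℂ) (A1 A2 : ℝ × ℝ → ℝ) (x : ℝ × ℝ) : ℂ :=
  D1 A1 u x + Complex.I * D2 A2 u x

/-- `σ₋ = D₁u − iD₂u`. -/
def sigM (u : ℝ × ℝ → ℂ) (A1 A2 : ℝ × ℝ → ℝ) (x : ℝ × ℝ) : ℂ :=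
  D1 A1 u x - Complex.I * D2 A2 u x

/-- The Yang--Mills--Higgs energy over the fundamental domain `[0,1]²`. -/
def energy (ε : ℝ) (u : ℝ × ℝ → ℂ) (A1 A2 : ℝ × ℝ → ℝ) : ℝ :=
  ∫ x in Set.Icc (0:ℝ) 1 ×ˢ Set.Icc (0:ℝ) 1,
    (ε ^ 2 * curv A1 A2 x ^ 2 + ‖D1 A1 u x‖ ^ 2 + ‖D2 A2 u x‖ ^ 2
      + (1 - ‖u x‖ ^ 2) ^ 2 / (4 * ε ^ 2))

/-- `ℤ²`-periodicity. -/
def Periodic2 {E : Type*} (f : ℝ × ℝ → E) : Prop :=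
  ∀ x : ℝ × ℝ, f (x.1 + 1, x.2) = f x ∧ f (x.1, x.2 + 1) = f x

/-- The Yang--Mills--Higgs equations on all of `ℝ²`. -/
def IsYMH (ε : ℝ) (u : ℝ × ℝ → ℂ) (A1 A2 : ℝ × ℝ → ℝ) : Prop :=
  (∀ x, -(D1 A1 (D1 A1 u) x + D2 A2 (D2 A2 u) x) = (hfun ε u x : ℂ) * u x) ∧
  (∀ x, ε ^ 2 * pd2 (curv A1 A2) x = ((starRingEnd ℂ) (u x) * D1 A1 u x).im) ∧
  (∀ x, ε ^ 2 * pd1 (curv A1 A2) x = -((starRingEnd ℂ) (u x) * D2 A2 u x).im)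

/-- The Yang--Mills--Higgs equations on an open set `U ⊆ ℝ²`. -/
def IsYMHOn (ε : ℝ) (u : ℝ × ℝ → ℂ) (A1 A2 : ℝ × ℝ → ℝ) (U : Set (ℝ × ℝ)) : Prop :=
  (∀ x ∈ U, -(D1 A1 (D1 A1 u) x + D2 A2 (D2 A2 u) x) = (hfun ε u x : ℂ) * u x) ∧
  (∀ x ∈ U, ε ^ 2 * pd2 (curv A1 A2) x = ((starRingEnd ℂ) (u x) * D1 A1 u x).im) ∧
  (∀ x ∈ U, ε ^ 2 * pd1 (curv A1 A2) x = -((starRingEnd ℂ) (u x) * D2 A2 u x).im)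

/-- Stability: nonnegative second variation of the energy along all smooth periodic
variations of the section and the connection. -/
def Stable (ε : ℝ) (u : ℝ × ℝ → ℂ) (A1 A2 : ℝ × ℝ → ℝ) : Prop :=
  ∀ v : ℝ × ℝ → ℂ, ∀ a1 a2 : ℝ × ℝ → ℝ,
    ContDiff ℝ (⊤ : ℕ∞) v → Periodic2 v → ContDiff ℝ (⊤ : ℕ∞) a1 → Periodic2 a1 →
    ContDiff ℝ (⊤ : ℕ∞) a2 → Periodic2 a2 →
    0 ≤ iteratedDeriv 2 (fun t : ℝ =>
      energy ε (fun x => u x + t • v x)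
        (fun x => A1 x + t * a1 x) (fun x => A2 x + t * a2 x)) 0

/-!
Along the line `t ↦ (u + t v, A + t a)` the energy density has derivative `2 ⟨G, (v, a)⟩ + div X`,
where `G` collects the residuals of the three Yang–Mills–Higgs equations and `X` is a periodic
vector field: moving one covariant derivative off `v` costs only a divergence, because the
connection is unitary, and so does moving one derivative off `a`. The divergence integrates to zero
over the unit square, so `G` is half the `L²`-gradient of the energy. As `G` is itself smooth and
periodic, it is an admissible test direction, and testing with it gives `∫ |G|² = 0`, hence `G = 0`.
-/

open scoped RealInnerProductSpace

theorem hasDerivAt_setIntegral_of_isCompact {X 𝕜 E : Type*} [TopologicalSpace X] [T2Space X]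
    [MeasurableSpace X] [OpensMeasurableSpace X] {μ : Measure X} [IsFiniteMeasureOnCompacts μ]
    [RCLike 𝕜] [NormedAddCommGroup E] [NormedSpace ℝ E] [NormedSpace 𝕜 E]
    [SecondCountableTopologyEither X E] {K : Set X} (hK : IsCompact K) {f f' : 𝕜 → X → E}
    (hf : ∀ t, Continuous (f t)) (hf' : Continuous (Function.uncurry f'))
    (hderiv : ∀ t x, HasDerivAt (f · x) (f' t x) t) (t₀ : 𝕜) :
    HasDerivAt (fun t => ∫ x in K, f t x ∂μ) (∫ x in K, f' t₀ x ∂μ) t₀ := by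
  obtain ⟨C, hC⟩ := ((isCompact_closedBall t₀ 1).prod hK).exists_bound_of_continuousOn
    hf'.continuousOn
  have hf'_slice : Continuous (f' t₀) := hf'.comp (Continuous.prodMk_right t₀)
  refine (hasDerivAt_integral_of_dominated_loc_of_deriv_le (bound := fun _ => C)
    (Metric.closedBall_mem_nhds t₀ one_pos) (.of_forall fun t => (hf t).aestronglyMeasurable)
    ((hf t₀).continuousOn.integrableOn_compact hK) hf'_slice.aestronglyMeasurable ?_
    (integrableOn_const hK.measure_lt_top.ne) (.of_forall fun x t _ => hderiv t x)).2
  exact ae_restrict_of_forall_mem hK.measurableSet fun x hx t ht => hC (t, x) ⟨ht, hx⟩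

section Periodic

variable {E F G : Type*} {f : ℝ × ℝ → E} {g : ℝ × ℝ → F}

theorem periodic2_iff :
    Periodic2 f ↔ Function.Periodic f (1, 0) ∧ Function.Periodic f (0, 1) := by
  simp only [Periodic2, Function.Periodic, Prod.add_def, add_zero, forall_and]

theorem Periodic2.map₂ (φ : E → F → G) (hf : Periodic2 f) (hg : Periodic2 g) :
    Periodic2 fun x => φ (f x) (g x) :=
  fun x => ⟨congrArg₂ φ (hf x).1 (hg x).1, congrArg₂ φ (hf x).2 (hg x).2⟩

theorem Periodic2.map (φ : E → F) (hf : Periodic2 f) : Periodic2 fun x => φ (f x) :=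
  hf.map₂ (fun y _ => φ y) hf

theorem Periodic2.apply_fract (hf : Periodic2 f) (x : ℝ × ℝ) :
    f (Int.fract x.1, Int.fract x.2) = f x := by
  obtain ⟨h₁, h₂⟩ := periodic2_iff.1 hf
  have hx : (Int.fract x.1, Int.fract x.2) = x - ⌊x.1⌋ • (1, 0) - ⌊x.2⌋ • ((0 : ℝ), (1 : ℝ)) := by
    ext <;> simp
  rw [hx, h₂.sub_zsmul_eq, h₁.sub_zsmul_eq]

theorem Periodic2.fderiv_apply [NormedAddCommGroup E] [NormedSpace ℝ E] (hf : Periodic2 f)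
    (e : ℝ × ℝ) : Periodic2 fun x => fderiv ℝ f x e := by
  have h (c : ℝ × ℝ) (hc : Function.Periodic f c) :
      Function.Periodic (fun x => fderiv ℝ f x e) c := fun x => by
    beta_reduce
    rw [← fderiv_comp_add_right, funext hc]
  exact periodic2_iff.2 ((periodic2_iff.1 hf).imp (h _) (h _))

end Periodic

section UnitSquare

/-- The fundamental domain `[0,1]²` of the `ℤ²`-action, written exactly as in `energy`. -/
abbrev unitSquare : Set (ℝ × ℝ) := Set.Icc (0 : ℝ) 1 ×ˢ Set.Icc (0 : ℝ) 1

variable {E : Type*} [NormedAddCommGroup E]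

theorem isCompact_unitSquare : IsCompact unitSquare :=
  isCompact_Icc.prod isCompact_Icc

theorem integrableOn_unitSquare {f : ℝ × ℝ → E} (hf : Continuous f) :
    IntegrableOn f unitSquare :=
  hf.continuousOn.integrableOn_compact isCompact_unitSquare

theorem continuous_divergence [NormedSpace ℝ E] {f g : ℝ × ℝ → E} (hf : ContDiff ℝ 1 f)
    (hg : ContDiff ℝ 1 g) : Continuous fun x => pd1 f x + pd2 g x :=
  ((hf.continuous_fderiv one_ne_zero).clm_apply continuous_const).add
    ((hg.continuous_fderiv one_ne_zero).clm_apply continuous_const)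

theorem setIntegral_unitSquare_divergence_eq_zero [NormedSpace ℝ E] {f g : ℝ × ℝ → E}
    (hf : ContDiff ℝ 1 f) (hg : ContDiff ℝ 1 g) (hfp : Periodic2 f) (hgp : Periodic2 g) :
    ∫ x in unitSquare, (pd1 f x + pd2 g x) = 0 := by
  have hint := integrableOn_unitSquare (continuous_divergence hf hg)
  have hf_sides (y : ℝ) : f (1, y) = f (0, y) := by simpa using (hfp (0, y)).1
  have hg_sides (y : ℝ) : g (y, 1) = g (y, 0) := by simpa using (hgp (y, 0)).2
  rw [unitSquare, Set.Icc_prod_Icc] at hint ⊢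
  refine (integral_divergence_prod_Icc_of_hasFDerivAt_of_le f g (fderiv ℝ f) (fderiv ℝ g) (0, 0)
    (1, 1) (Prod.mk_le_mk.2 ⟨zero_le_one, zero_le_one⟩) hf.continuous.continuousOn
    hg.continuous.continuousOn (fun x _ => (hf.differentiable one_ne_zero x).hasFDerivAt)
    (fun x _ => (hg.differentiable one_ne_zero x).hasFDerivAt) hint).trans ?_
  simp only [hf_sides, hg_sides, sub_self, zero_add]

theorem Periodic2.eq_zero_of_setIntegral_eq_zero {f : ℝ × ℝ → ℝ} (hp : Periodic2 f)
    (hf : Continuous f) (h0 : ∀ x, 0 ≤ f x) (hint : ∫ x in unitSquare, f x = 0) (x : ℝ × ℝ) :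
    f x = 0 := by
  have hae := (setIntegral_eq_zero_iff_of_nonneg_ae (.of_forall h0)
    (integrableOn_unitSquare hf)).1 hint
  have hEqOn : Set.EqOn f 0 unitSquare :=
    Measure.eqOn_of_ae_eq hae hf.continuousOn continuousOn_const <| by
      rw [interior_prod_eq, closure_prod_eq, closure_interior_Icc zero_ne_one]
  rw [← hp.apply_fract x]
  exact hEqOn ⟨⟨Int.fract_nonneg _, (Int.fract_lt_one _).le⟩,
    Int.fract_nonneg _, (Int.fract_lt_one _).le⟩

end UnitSquare

section CovariantDerivative

variable {V : Type*} [NormedAddCommGroup V] [NormedSpace ℝ V]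

/-- The covariant derivative `∂ₑf − iAf` of a section in the direction `e`, where `A` is the
component of the connection form along `e`; `D1` and `D2` are the two coordinate directions. -/
def covDeriv (e : V) (A : V → ℝ) (f : V → ℂ) (x : V) : ℂ :=
  fderiv ℝ f x e - I * A x * f x

theorem D1_eq_covDeriv : D1 = covDeriv (1, 0) := rfl

theorem D2_eq_covDeriv : D2 = covDeriv (0, 1) := rfl

variable {e x : V} {A a : V → ℝ} {f g : V → ℂ}

theorem contDiff_covDeriv {m n : WithTop ℕ∞} (hA : ContDiff ℝ n A) (hf : ContDiff ℝ m f)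
    (hnm : n + 1 ≤ m) : ContDiff ℝ n (covDeriv e A f) :=
  ((hf.fderiv_right hnm).clm_apply contDiff_const).sub
    ((contDiff_const.mul (ofRealCLM.contDiff.comp hA)).mul (hf.of_le (le_self_add.trans hnm)))

theorem continuous_covDeriv (hA : Continuous A) (hf : ContDiff ℝ 1 f) :
    Continuous (covDeriv e A f) :=
  (contDiff_covDeriv (contDiff_zero.2 hA) hf (zero_add 1).le).continuous

theorem Periodic2.covDeriv {A : ℝ × ℝ → ℝ} {f : ℝ × ℝ → ℂ} (hA : Periodic2 A) (hf : Periodic2 f)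
    (e : ℝ × ℝ) : Periodic2 (covDeriv e A f) :=
  (hf.fderiv_apply e).map₂ (· - ·) (hA.map₂ (fun (s : ℝ) z => I * s * z) hf)

theorem inner_I_mul_ofReal_mul_right (s : ℝ) (z w : ℂ) :
    ⟪w, I * s * z⟫ = s * (starRingEnd ℂ z * w).im := by
  simp only [Complex.inner, mul_re, mul_im, conj_re, conj_im, I_re, I_im, ofReal_re, ofReal_im]
  ring

-- The connection terms cancel because multiplication by `i` is skew-symmetric.
theorem fderiv_inner_eq_covDeriv (hf : DifferentiableAt ℝ f x) (hg : DifferentiableAt ℝ g x) :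
    fderiv ℝ (fun y => ⟪f y, g y⟫) x e = ⟪covDeriv e A f x, g x⟫ + ⟪f x, covDeriv e A g x⟫ := by
  have hskew : ⟪I * A x * f x, g x⟫ + ⟪f x, I * A x * g x⟫ = 0 := by
    rw [real_inner_comm, inner_I_mul_ofReal_mul_right, inner_I_mul_ofReal_mul_right]
    simp only [mul_im, conj_re, conj_im]
    ring
  rw [fderiv_inner_apply ℝ hf hg, covDeriv, covDeriv, inner_sub_left, inner_sub_right]
  linarith

theorem covDeriv_add_mul (t : ℝ) :
    covDeriv e (fun y => A y + t * a y) f x = covDeriv e A f x - t • (I * a x * f x) := by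
  simp only [covDeriv, ofReal_add, ofReal_mul, real_smul]
  ring

theorem covDeriv_add_smul (hf : DifferentiableAt ℝ f x) (hg : DifferentiableAt ℝ g x) (t : ℝ) :
    covDeriv e A (fun y => f y + t • g y) x = covDeriv e A f x + t • covDeriv e A g x := by
  rw [covDeriv, fderiv_fun_add hf (hg.fun_const_smul t), fderiv_fun_const_smul hg]
  simp only [covDeriv, add_apply, smul_apply, real_smul]
  ring

theorem hasDerivAt_covDeriv_line (hf : DifferentiableAt ℝ f x) (hg : DifferentiableAt ℝ g x)
    (t : ℝ) :
    HasDerivAt (fun s : ℝ => covDeriv e (fun y => A y + s * a y) (fun y => f y + s • g y) x)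
      (covDeriv e (fun y => A y + t * a y) g x - I * a x * (f x + t • g x)) t := by
  have hline (z w : ℂ) : HasDerivAt (fun s : ℝ => z + s • w) w t := by
    simpa using ((hasDerivAt_id t).smul_const w).const_add z
  simp_rw [covDeriv_add_mul, covDeriv_add_smul hf hg]
  refine ((hline (covDeriv e A f x) (covDeriv e A g x)).sub
    ((hasDerivAt_id t).smul ((hline (f x) (g x)).const_mul (I * a x)))).congr_deriv ?_
  simp only [id_eq, one_smul]
  ring

end CovariantDerivative

section Curvature

variable {A1 A2 a1 a2 : ℝ × ℝ → ℝ}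

theorem contDiff_curv {m n : WithTop ℕ∞} (hA1 : ContDiff ℝ m A1) (hA2 : ContDiff ℝ m A2)
    (hnm : n + 1 ≤ m) : ContDiff ℝ n (curv A1 A2) :=
  ((hA2.fderiv_right hnm).clm_apply contDiff_const).sub
    ((hA1.fderiv_right hnm).clm_apply contDiff_const)

theorem Periodic2.curv (hA1 : Periodic2 A1) (hA2 : Periodic2 A2) : Periodic2 (curv A1 A2) :=
  (hA2.fderiv_apply (1, 0)).map₂ (· - ·) (hA1.fderiv_apply (0, 1))

theorem curv_add_mul {x : ℝ × ℝ} (hA1 : DifferentiableAt ℝ A1 x) (hA2 : DifferentiableAt ℝ A2 x)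
    (ha1 : DifferentiableAt ℝ a1 x) (ha2 : DifferentiableAt ℝ a2 x) (t : ℝ) :
    curv (fun y => A1 y + t * a1 y) (fun y => A2 y + t * a2 y) x
      = curv A1 A2 x + t * curv a1 a2 x := by
  simp only [curv, pd1, pd2]
  rw [fderiv_fun_add hA1 (ha1.const_mul t), fderiv_fun_add hA2 (ha2.const_mul t),
    fderiv_const_mul ha1, fderiv_const_mul ha2]
  simp only [add_apply, smul_apply, smul_eq_mul]
  ring

end Curvature

section FirstVariation

/-- The integrand of `energy`. -/
def energyDensity (ε : ℝ) (u : ℝ × ℝ → ℂ) (A1 A2 : ℝ × ℝ → ℝ) (x : ℝ × ℝ) : ℝ :=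
  ε ^ 2 * curv A1 A2 x ^ 2 + ‖D1 A1 u x‖ ^ 2 + ‖D2 A2 u x‖ ^ 2
    + (1 - ‖u x‖ ^ 2) ^ 2 / (4 * ε ^ 2)

theorem energy_eq_setIntegral_energyDensity (ε : ℝ) (u : ℝ × ℝ → ℂ) (A1 A2 : ℝ × ℝ → ℝ) :
    energy ε u A1 A2 = ∫ x in unitSquare, energyDensity ε u A1 A2 x := rfl

/-- The derivative of the energy density of `(u, A)` in the direction `(v, a)`; the brackets
`D v - i a u` are the linearisations of the covariant derivatives. -/
def firstVariationDensity (ε : ℝ) (u : ℝ × ℝ → ℂ) (A1 A2 : ℝ × ℝ → ℝ) (v : ℝ × ℝ → ℂ)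
    (a1 a2 : ℝ × ℝ → ℝ) (x : ℝ × ℝ) : ℝ :=
  2 * (ε ^ 2 * (curv A1 A2 x * curv a1 a2 x) + ⟪D1 A1 u x, D1 A1 v x - I * a1 x * u x⟫
    + ⟪D2 A2 u x, D2 A2 v x - I * a2 x * u x⟫ - hfun ε u x * ⟪u x, v x⟫)

/-- The `u`-component of half the `L²`-gradient of the energy. -/
def sectionGradient (ε : ℝ) (u : ℝ × ℝ → ℂ) (A1 A2 : ℝ × ℝ → ℝ) (x : ℝ × ℝ) : ℂ :=
  -(D1 A1 (D1 A1 u) x + D2 A2 (D2 A2 u) x) - hfun ε u x * u x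

/-- The `A₁`-component of half the `L²`-gradient of the energy. -/
def connectionGradient1 (ε : ℝ) (u : ℝ × ℝ → ℂ) (A1 A2 : ℝ × ℝ → ℝ) (x : ℝ × ℝ) : ℝ :=
  ε ^ 2 * pd2 (curv A1 A2) x - (starRingEnd ℂ (u x) * D1 A1 u x).im

/-- The `A₂`-component of half the `L²`-gradient of the energy. -/
def connectionGradient2 (ε : ℝ) (u : ℝ × ℝ → ℂ) (A1 A2 : ℝ × ℝ → ℝ) (x : ℝ × ℝ) : ℝ :=
  -(ε ^ 2 * pd1 (curv A1 A2) x) - (starRingEnd ℂ (u x) * D2 A2 u x).im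

variable {ε : ℝ} {u v : ℝ × ℝ → ℂ} {A1 A2 a1 a2 : ℝ × ℝ → ℝ}

theorem isYMH_iff_gradients_eq_zero :
    IsYMH ε u A1 A2 ↔ (∀ x, sectionGradient ε u A1 A2 x = 0) ∧
      (∀ x, connectionGradient1 ε u A1 A2 x = 0) ∧ ∀ x, connectionGradient2 ε u A1 A2 x = 0 := by
  simp only [IsYMH, sectionGradient, connectionGradient1, connectionGradient2, sub_eq_zero,
    neg_eq_iff_eq_neg]

theorem Periodic2.sectionGradient (hu : Periodic2 u) (hA1 : Periodic2 A1) (hA2 : Periodic2 A2) :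
    Periodic2 (sectionGradient ε u A1 A2) :=
  ((hA1.covDeriv (hA1.covDeriv hu _) (1, 0)).map₂ (fun z w => -(z + w))
    (hA2.covDeriv (hA2.covDeriv hu _) (0, 1))).map₂ (· - ·)
      (hu.map fun z : ℂ => ((1 - ‖z‖ ^ 2) / (2 * ε ^ 2) : ℝ) * z)

theorem Periodic2.connectionGradient1 (hu : Periodic2 u) (hA1 : Periodic2 A1)
    (hA2 : Periodic2 A2) : Periodic2 (connectionGradient1 ε u A1 A2) :=
  ((hA1.curv hA2).fderiv_apply (0, 1)).map₂ (fun s c => ε ^ 2 * s - c)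
    (hu.map₂ (fun z w => (starRingEnd ℂ z * w).im) (hA1.covDeriv hu (1, 0)))

theorem Periodic2.connectionGradient2 (hu : Periodic2 u) (hA1 : Periodic2 A1)
    (hA2 : Periodic2 A2) : Periodic2 (connectionGradient2 ε u A1 A2) :=
  ((hA1.curv hA2).fderiv_apply (1, 0)).map₂ (fun s c => -(ε ^ 2 * s) - c)
    (hu.map₂ (fun z w => (starRingEnd ℂ z * w).im) (hA2.covDeriv hu (0, 1)))

section Regularity

variable {m n : WithTop ℕ∞}

theorem contDiff_sectionGradient (hu : ContDiff ℝ m u) (hA1 : ContDiff ℝ m A1)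
    (hA2 : ContDiff ℝ m A2) (hnm : n + 1 + 1 ≤ m) : ContDiff ℝ n (sectionGradient ε u A1 A2) := by
  have hm₁ : n + 1 ≤ m := le_self_add.trans hnm
  have hm₀ : n ≤ m := le_self_add.trans hm₁
  have hh : ContDiff ℝ n (hfun ε u) :=
    (contDiff_const.sub ((hu.of_le hm₀).norm_sq ℝ)).div_const _
  exact ((contDiff_covDeriv (hA1.of_le hm₀) (contDiff_covDeriv (hA1.of_le hm₁) hu hnm) le_rfl).add
    (contDiff_covDeriv (hA2.of_le hm₀) (contDiff_covDeriv (hA2.of_le hm₁) hu hnm) le_rfl)).neg.sub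
    ((ofRealCLM.contDiff.comp hh).mul (hu.of_le hm₀))

theorem contDiff_im_conj_mul {V : Type*} [NormedAddCommGroup V] [NormedSpace ℝ V] {f g : V → ℂ}
    (hf : ContDiff ℝ n f) (hg : ContDiff ℝ n g) :
    ContDiff ℝ n fun x => (starRingEnd ℂ (f x) * g x).im :=
  imCLM.contDiff.comp ((conjCLE.contDiff.comp hf).mul hg)

theorem contDiff_connectionGradient1 (hu : ContDiff ℝ m u) (hA1 : ContDiff ℝ m A1)
    (hA2 : ContDiff ℝ m A2) (hnm : n + 1 + 1 ≤ m) :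
    ContDiff ℝ n (connectionGradient1 ε u A1 A2) := by
  have hm₁ : n + 1 ≤ m := le_self_add.trans hnm
  have hm₀ : n ≤ m := le_self_add.trans hm₁
  exact (contDiff_const.mul (((contDiff_curv hA1 hA2 hnm).fderiv_right le_rfl).clm_apply
    contDiff_const)).sub
      (contDiff_im_conj_mul (hu.of_le hm₀) (contDiff_covDeriv (hA1.of_le hm₀) hu hm₁))

theorem contDiff_connectionGradient2 (hu : ContDiff ℝ m u) (hA1 : ContDiff ℝ m A1)
    (hA2 : ContDiff ℝ m A2) (hnm : n + 1 + 1 ≤ m) :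
    ContDiff ℝ n (connectionGradient2 ε u A1 A2) := by
  have hm₁ : n + 1 ≤ m := le_self_add.trans hnm
  have hm₀ : n ≤ m := le_self_add.trans hm₁
  exact (contDiff_const.mul (((contDiff_curv hA1 hA2 hnm).fderiv_right le_rfl).clm_apply
    contDiff_const)).neg.sub
      (contDiff_im_conj_mul (hu.of_le hm₀) (contDiff_covDeriv (hA2.of_le hm₀) hu hm₁))

end Regularity

theorem hasDerivAt_energyDensity_line {x : ℝ × ℝ} (hu : DifferentiableAt ℝ u x)
    (hA1 : DifferentiableAt ℝ A1 x) (hA2 : DifferentiableAt ℝ A2 x) (hv : DifferentiableAt ℝ v x)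
    (ha1 : DifferentiableAt ℝ a1 x) (ha2 : DifferentiableAt ℝ a2 x) (t : ℝ) :
    HasDerivAt (fun s : ℝ => energyDensity ε (fun y => u y + s • v y)
        (fun y => A1 y + s * a1 y) (fun y => A2 y + s * a2 y) x)
      (firstVariationDensity ε (fun y => u y + t • v y) (fun y => A1 y + t * a1 y)
        (fun y => A2 y + t * a2 y) v a1 a2 x) t := by
  have hcurv : HasDerivAt
      (fun s : ℝ => curv (fun y => A1 y + s * a1 y) (fun y => A2 y + s * a2 y) x)
      (curv a1 a2 x) t := by
    simp_rw [curv_add_mul hA1 hA2 ha1 ha2]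
    simpa using ((hasDerivAt_id t).mul_const (curv a1 a2 x)).const_add (curv A1 A2 x)
  have hsection : HasDerivAt (fun s : ℝ => u x + s • v x) (v x) t := by
    simpa using ((hasDerivAt_id t).smul_const (v x)).const_add (u x)
  refine (((((hcurv.pow 2).const_mul (ε ^ 2)).add
    (hasDerivAt_covDeriv_line (e := (1, 0)) (A := A1) (a := a1) hu hv t).norm_sq).add
    (hasDerivAt_covDeriv_line (e := (0, 1)) (A := A2) (a := a2) hu hv t).norm_sq).add
    (((hsection.norm_sq.const_sub 1).pow 2).div_const (4 * ε ^ 2))).congr_deriv ?_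
  simp only [firstVariationDensity, hfun, D1_eq_covDeriv, D2_eq_covDeriv]
  ring

theorem continuous_energyDensity (hu : ContDiff ℝ 1 u) (hA1 : ContDiff ℝ 1 A1)
    (hA2 : ContDiff ℝ 1 A2) : Continuous (energyDensity ε u A1 A2) := by
  have hF := (contDiff_curv hA1 hA2 (zero_add 1).le).continuous
  have hD1 := continuous_covDeriv (e := (1, 0)) hA1.continuous hu
  have hD2 := continuous_covDeriv (e := (0, 1)) hA2.continuous hu
  have hu₀ := hu.continuous
  unfold energyDensity
  rw [D1_eq_covDeriv, D2_eq_covDeriv]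
  fun_prop

theorem continuous_firstVariationDensity_line (hu : ContDiff ℝ 1 u) (hA1 : ContDiff ℝ 1 A1)
    (hA2 : ContDiff ℝ 1 A2) (hv : ContDiff ℝ 1 v) (ha1 : ContDiff ℝ 1 a1)
    (ha2 : ContDiff ℝ 1 a2) :
    Continuous fun p : ℝ × ℝ × ℝ => firstVariationDensity ε (fun y => u y + p.1 • v y)
      (fun y => A1 y + p.1 * a1 y) (fun y => A2 y + p.1 * a2 y) v a1 a2 p.2 := by
  have hF := (contDiff_curv hA1 hA2 (zero_add 1).le).continuous
  have hf := (contDiff_curv ha1 ha2 (zero_add 1).le).continuous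
  have hD1u := continuous_covDeriv (e := (1, 0)) hA1.continuous hu
  have hD2u := continuous_covDeriv (e := (0, 1)) hA2.continuous hu
  have hD1v := continuous_covDeriv (e := (1, 0)) hA1.continuous hv
  have hD2v := continuous_covDeriv (e := (0, 1)) hA2.continuous hv
  have hu₀ := hu.continuous
  have hv₀ := hv.continuous
  have ha1₀ := ha1.continuous
  have ha2₀ := ha2.continuous
  have hdu (x : ℝ × ℝ) := hu.differentiable one_ne_zero x
  have hdv (x : ℝ × ℝ) := hv.differentiable one_ne_zero x
  unfold firstVariationDensity hfun
  simp_rw [D1_eq_covDeriv, D2_eq_covDeriv, covDeriv_add_mul, covDeriv_add_smul (hdu _) (hdv _),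
    curv_add_mul (hA1.differentiable one_ne_zero _) (hA2.differentiable one_ne_zero _)
      (ha1.differentiable one_ne_zero _) (ha2.differentiable one_ne_zero _)]
  fun_prop

theorem hasDerivAt_energy_line (hu : ContDiff ℝ 1 u) (hA1 : ContDiff ℝ 1 A1)
    (hA2 : ContDiff ℝ 1 A2) (hv : ContDiff ℝ 1 v) (ha1 : ContDiff ℝ 1 a1)
    (ha2 : ContDiff ℝ 1 a2) (t : ℝ) :
    HasDerivAt (fun s : ℝ => energy ε (fun x => u x + s • v x) (fun x => A1 x + s * a1 x)
        (fun x => A2 x + s * a2 x))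
      (∫ x in unitSquare, firstVariationDensity ε (fun x => u x + t • v x)
        (fun x => A1 x + t * a1 x) (fun x => A2 x + t * a2 x) v a1 a2 x) t := by
  simp_rw [energy_eq_setIntegral_energyDensity]
  refine hasDerivAt_setIntegral_of_isCompact isCompact_unitSquare
    (f' := fun s => firstVariationDensity ε (fun x => u x + s • v x)
      (fun x => A1 x + s * a1 x) (fun x => A2 x + s * a2 x) v a1 a2)
    (fun s => ?_) ?_ (fun s x => ?_) t
  · exact continuous_energyDensity (hu.add (hv.const_smul s))
      (hA1.add (contDiff_const.mul ha1)) (hA2.add (contDiff_const.mul ha2))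
  · exact continuous_firstVariationDensity_line hu hA1 hA2 hv ha1 ha2
  · exact hasDerivAt_energyDensity_line (hu.differentiable one_ne_zero x)
      (hA1.differentiable one_ne_zero x) (hA2.differentiable one_ne_zero x)
      (hv.differentiable one_ne_zero x) (ha1.differentiable one_ne_zero x)
      (ha2.differentiable one_ne_zero x) s

theorem firstVariationDensity_eq_gradient_add_divergence {x : ℝ × ℝ}
    (hD1 : DifferentiableAt ℝ (D1 A1 u) x) (hD2 : DifferentiableAt ℝ (D2 A2 u) x)
    (hF : DifferentiableAt ℝ (curv A1 A2) x) (hv : DifferentiableAt ℝ v x)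
    (ha1 : DifferentiableAt ℝ a1 x) (ha2 : DifferentiableAt ℝ a2 x) :
    firstVariationDensity ε u A1 A2 v a1 a2 x =
      2 * ((⟪sectionGradient ε u A1 A2 x, v x⟫ + connectionGradient1 ε u A1 A2 x * a1 x
          + connectionGradient2 ε u A1 A2 x * a2 x)
        + (pd1 (fun y => ⟪D1 A1 u y, v y⟫ + ε ^ 2 * (curv A1 A2 y * a2 y)) x
          + pd2 (fun y => ⟪D2 A2 u y, v y⟫ - ε ^ 2 * (curv A1 A2 y * a1 y)) x)) := by
  have hflux1 : pd1 (fun y => ⟪D1 A1 u y, v y⟫ + ε ^ 2 * (curv A1 A2 y * a2 y)) x =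
      ⟪D1 A1 (D1 A1 u) x, v x⟫ + ⟪D1 A1 u x, D1 A1 v x⟫
        + ε ^ 2 * (curv A1 A2 x * pd1 a2 x + pd1 (curv A1 A2) x * a2 x) := by
    rw [pd1, fderiv_fun_add (hD1.inner ℝ hv) ((hF.fun_mul ha2).const_mul _), add_apply,
      fderiv_inner_eq_covDeriv (A := A1) hD1 hv, fderiv_const_mul (hF.fun_mul ha2),
      fderiv_fun_mul hF ha2]
    simp only [add_apply, smul_apply, smul_eq_mul, D1_eq_covDeriv, pd1]
    ring
  have hflux2 : pd2 (fun y => ⟪D2 A2 u y, v y⟫ - ε ^ 2 * (curv A1 A2 y * a1 y)) x =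
      ⟪D2 A2 (D2 A2 u) x, v x⟫ + ⟪D2 A2 u x, D2 A2 v x⟫
        - ε ^ 2 * (curv A1 A2 x * pd2 a1 x + pd2 (curv A1 A2) x * a1 x) := by
    rw [pd2, fderiv_fun_sub (hD2.inner ℝ hv) ((hF.fun_mul ha1).const_mul _), sub_apply,
      fderiv_inner_eq_covDeriv (A := A2) hD2 hv, fderiv_const_mul (hF.fun_mul ha1),
      fderiv_fun_mul hF ha1]
    simp only [add_apply, smul_apply, smul_eq_mul, D2_eq_covDeriv, pd2]
    ring
  have hsection : ⟪sectionGradient ε u A1 A2 x, v x⟫ =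
      -(⟪D1 A1 (D1 A1 u) x, v x⟫ + ⟪D2 A2 (D2 A2 u) x, v x⟫) - hfun ε u x * ⟪u x, v x⟫ := by
    rw [sectionGradient, ← real_smul, inner_sub_left, inner_neg_left, inner_add_left,
      real_inner_smul_left]
  rw [hflux1, hflux2, hsection, firstVariationDensity, inner_sub_right, inner_sub_right,
    inner_I_mul_ofReal_mul_right, inner_I_mul_ofReal_mul_right, curv.eq_def a1 a2,
    connectionGradient1, connectionGradient2]
  ring

theorem setIntegral_firstVariationDensity (hu : ContDiff ℝ 2 u) (hup : Periodic2 u)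
    (hA1 : ContDiff ℝ 2 A1) (hA1p : Periodic2 A1) (hA2 : ContDiff ℝ 2 A2) (hA2p : Periodic2 A2)
    (hv : ContDiff ℝ 1 v) (hvp : Periodic2 v) (ha1 : ContDiff ℝ 1 a1) (ha1p : Periodic2 a1)
    (ha2 : ContDiff ℝ 1 a2) (ha2p : Periodic2 a2) :
    ∫ x in unitSquare, firstVariationDensity ε u A1 A2 v a1 a2 x =
      2 * ∫ x in unitSquare, (⟪sectionGradient ε u A1 A2 x, v x⟫
        + connectionGradient1 ε u A1 A2 x * a1 x + connectionGradient2 ε u A1 A2 x * a2 x) := by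
  have hF : ContDiff ℝ 1 (curv A1 A2) := contDiff_curv hA1 hA2 one_add_one_eq_two.le
  have hD1 : ContDiff ℝ 1 (D1 A1 u) :=
    contDiff_covDeriv (hA1.of_le one_le_two) hu one_add_one_eq_two.le
  have hD2 : ContDiff ℝ 1 (D2 A2 u) :=
    contDiff_covDeriv (hA2.of_le one_le_two) hu one_add_one_eq_two.le
  have hflux1 : ContDiff ℝ 1 fun x => ⟪D1 A1 u x, v x⟫ + ε ^ 2 * (curv A1 A2 x * a2 x) :=
    (hD1.inner ℝ hv).add (contDiff_const.mul (hF.mul ha2))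
  have hflux2 : ContDiff ℝ 1 fun x => ⟪D2 A2 u x, v x⟫ - ε ^ 2 * (curv A1 A2 x * a1 x) :=
    (hD2.inner ℝ hv).sub (contDiff_const.mul (hF.mul ha1))
  have hdiv := setIntegral_unitSquare_divergence_eq_zero hflux1 hflux2
    (((hA1p.covDeriv hup _).map₂ (⟪·, ·⟫) hvp).map₂ (· + ε ^ 2 * ·)
      ((hA1p.curv hA2p).map₂ (· * ·) ha2p))
    (((hA2p.covDeriv hup _).map₂ (⟪·, ·⟫) hvp).map₂ (· - ε ^ 2 * ·)
      ((hA1p.curv hA2p).map₂ (· * ·) ha1p))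
  have hpairing : Continuous fun x => ⟪sectionGradient ε u A1 A2 x, v x⟫
      + connectionGradient1 ε u A1 A2 x * a1 x + connectionGradient2 ε u A1 A2 x * a2 x := by
    have h2 : (0 : WithTop ℕ∞) + 1 + 1 ≤ 2 := by norm_num
    exact (((contDiff_sectionGradient hu hA1 hA2 h2).continuous.inner hv.continuous).add
      ((contDiff_connectionGradient1 hu hA1 hA2 h2).continuous.mul ha1.continuous)).add
        ((contDiff_connectionGradient2 hu hA1 hA2 h2).continuous.mul ha2.continuous)
  simp_rw [fun x => firstVariationDensity_eq_gradient_add_divergence (ε := ε)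
    (hD1.differentiable one_ne_zero x) (hD2.differentiable one_ne_zero x)
    (hF.differentiable one_ne_zero x) (hv.differentiable one_ne_zero x)
    (ha1.differentiable one_ne_zero x) (ha2.differentiable one_ne_zero x)]
  rw [integral_const_mul, integral_add (integrableOn_unitSquare hpairing)
    (integrableOn_unitSquare (continuous_divergence hflux1 hflux2)), hdiv, add_zero]

theorem deriv_energy_line_zero (hu : ContDiff ℝ 2 u) (hup : Periodic2 u)
    (hA1 : ContDiff ℝ 2 A1) (hA1p : Periodic2 A1) (hA2 : ContDiff ℝ 2 A2) (hA2p : Periodic2 A2)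
    (hv : ContDiff ℝ 1 v) (hvp : Periodic2 v) (ha1 : ContDiff ℝ 1 a1) (ha1p : Periodic2 a1)
    (ha2 : ContDiff ℝ 1 a2) (ha2p : Periodic2 a2) :
    deriv (fun t : ℝ => energy ε (fun x => u x + t • v x) (fun x => A1 x + t * a1 x)
        (fun x => A2 x + t * a2 x)) 0 =
      2 * ∫ x in unitSquare, (⟪sectionGradient ε u A1 A2 x, v x⟫
        + connectionGradient1 ε u A1 A2 x * a1 x + connectionGradient2 ε u A1 A2 x * a2 x) := by
  rw [(hasDerivAt_energy_line (hu.of_le one_le_two) (hA1.of_le one_le_two)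
    (hA2.of_le one_le_two) hv ha1 ha2 0).deriv]
  simp only [zero_smul, zero_mul, add_zero]
  exact setIntegral_firstVariationDensity hu hup hA1 hA1p hA2 hA2p hv hvp ha1 ha1p ha2 ha2p

theorem gradients_eq_zero_of_setIntegral_eq_zero (hu : ContDiff ℝ 2 u) (hup : Periodic2 u)
    (hA1 : ContDiff ℝ 2 A1) (hA1p : Periodic2 A1) (hA2 : ContDiff ℝ 2 A2) (hA2p : Periodic2 A2)
    (hint : ∫ x in unitSquare, (‖sectionGradient ε u A1 A2 x‖ ^ 2
      + connectionGradient1 ε u A1 A2 x ^ 2 + connectionGradient2 ε u A1 A2 x ^ 2) = 0) :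
    (∀ x, sectionGradient ε u A1 A2 x = 0) ∧ (∀ x, connectionGradient1 ε u A1 A2 x = 0) ∧
      ∀ x, connectionGradient2 ε u A1 A2 x = 0 := by
  have h2 : (0 : WithTop ℕ∞) + 1 + 1 ≤ 2 := by norm_num
  have hcont := (((contDiff_sectionGradient (ε := ε) hu hA1 hA2 h2).continuous.norm.pow 2).add
    ((contDiff_connectionGradient1 (ε := ε) hu hA1 hA2 h2).continuous.pow 2)).add
      ((contDiff_connectionGradient2 (ε := ε) hu hA1 hA2 h2).continuous.pow 2)
  have hper := ((hup.sectionGradient (ε := ε) hA1p hA2p).map₂ (‖·‖ ^ 2 + · ^ 2)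
    (hup.connectionGradient1 (ε := ε) hA1p hA2p)).map₂ (· + · ^ 2)
      (hup.connectionGradient2 (ε := ε) hA1p hA2p)
  have hzero (x : ℝ × ℝ) := hper.eq_zero_of_setIntegral_eq_zero hcont (fun x => by positivity)
    hint x
  simp only [← forall_and]
  intro x
  have hx := hzero x
  rw [add_eq_zero_iff_of_nonneg (by positivity) (by positivity),
    add_eq_zero_iff_of_nonneg (by positivity) (by positivity), and_assoc] at hx
  simpa using hx

end FirstVariation

/-- Euler--Lagrange characterization: `(u, A)` solves the Yang--Mills--Higgs equations iff
the first variation of the energy vanishes for all smooth periodic test pairs. -/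
theorem YMH_iff_first_variation_vanishes
    (ε : ℝ) (hε : 0 < ε) (u : ℝ × ℝ → ℂ) (A1 A2 : ℝ × ℝ → ℝ)
    (hu : ContDiff ℝ (⊤ : ℕ∞) u) (hup : Periodic2 u)
    (hA1 : ContDiff ℝ (⊤ : ℕ∞) A1) (hA1p : Periodic2 A1)
    (hA2 : ContDiff ℝ (⊤ : ℕ∞) A2) (hA2p : Periodic2 A2) :
    IsYMH ε u A1 A2 ↔
      ∀ v : ℝ × ℝ → ℂ, ∀ a1 a2 : ℝ × ℝ → ℝ,
        ContDiff ℝ (⊤ : ℕ∞) v → Periodic2 v → ContDiff ℝ (⊤ : ℕ∞) a1 → Periodic2 a1 →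
        ContDiff ℝ (⊤ : ℕ∞) a2 → Periodic2 a2 →
        deriv (fun t : ℝ =>
          energy ε (fun x => u x + t • v x)
            (fun x => A1 x + t * a1 x) (fun x => A2 x + t * a2 x)) 0 = 0 := by
  have hsmooth : (⊤ : ℕ∞) + 1 + 1 ≤ ((⊤ : ℕ∞) : WithTop ℕ∞) := le_rfl
  have hle (k : ℕ) : (k : WithTop ℕ∞) ≤ (⊤ : ℕ∞) := mod_cast le_top (a := (k : ℕ∞))
  have hderiv {v a1 a2} (hv : ContDiff ℝ (⊤ : ℕ∞) v) (hvp) (ha1 : ContDiff ℝ (⊤ : ℕ∞) a1) (ha1p)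
      (ha2 : ContDiff ℝ (⊤ : ℕ∞) a2) (ha2p) :=
    deriv_energy_line_zero (ε := ε) (hu.of_le (hle 2)) hup (hA1.of_le (hle 2)) hA1p
      (hA2.of_le (hle 2)) hA2p (hv.of_le (hle 1)) hvp (ha1.of_le (hle 1)) ha1p (ha2.of_le (hle 1))
      ha2p
  rw [isYMH_iff_gradients_eq_zero]
  constructor
  · rintro ⟨hsec, hconn1, hconn2⟩ v a1 a2 hv hvp ha1 ha1p ha2 ha2p
    rw [hderiv hv hvp ha1 ha1p ha2 ha2p]
    simp [hsec, hconn1, hconn2]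
  · intro hcrit
    have hGu := contDiff_sectionGradient (ε := ε) hu hA1 hA2 hsmooth
    have hG1 := contDiff_connectionGradient1 (ε := ε) hu hA1 hA2 hsmooth
    have hG2 := contDiff_connectionGradient2 (ε := ε) hu hA1 hA2 hsmooth
    have hGup := hup.sectionGradient (ε := ε) hA1p hA2p
    have hG1p := hup.connectionGradient1 (ε := ε) hA1p hA2p
    have hG2p := hup.connectionGradient2 (ε := ε) hA1p hA2p
    have hself := (hderiv hGu hGup hG1 hG1p hG2 hG2p).symm.trans
      (hcrit _ _ _ hGu hGup hG1 hG1p hG2 hG2p)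
    refine gradients_eq_zero_of_setIntegral_eq_zero (hu.of_le (hle 2)) hup (hA1.of_le (hle 2)) hA1p
      (hA2.of_le (hle 2)) hA2p ?_
    simpa only [real_inner_self_eq_norm_sq, ← pow_two, mul_eq_zero, two_ne_zero, false_or]
      using hself
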